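/- arXiv:2009.00847 — 2 statements merged into one kernel-verified Lean document; each statement's English description precedes it below -/
import Mathlib

section
/- Let K be a field of characteristic zero, λ = (n_1^{ℓ_1} ⋯ n_r^{ℓ_r}) a partition of n of length ℓ, and (q_1,…,q_ℓ) an S_λ-equivariant sequence in K[z_1,…,z_ℓ] with (z_i − z_j) dividing (q_i − q_j) for all i ≠ j. Let (p_1,…,p_ℓ) be the associated symmetrized sequence defined from the divided differences of q (as in the symmetrization construction). Then there exist a matrix U ∈ K[z_1,…,z_ℓ]^{ℓ×ℓ} and a nonzero scalar c ∈ K such that det(U) = c·∏_{1 ≤ i < j ≤ ℓ}(z_i − z_j) and ∑_{i=1}^{ℓ} p_i·U_{i,j} = q_j for every j = 1,…,ℓ. In particular det(U) is a unit in the localization of K[z_1,…,z_ℓ] at the Vandermonde determinant Δ = ∏_{i<j}(z_i − z_j), and p and q generate the same ideal in that localization. -/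
/-!
Write `g_m = Q {m, …, ℓ-1}` for the divided differences along the terminal segments. Solving the
recursion `(z_i - z_s) Q ({i} ∪ {a ≥ s}) = g_s - Q ({i} ∪ {a > s})` for its last term gives a
Newton expansion (`newton`) of every `Q ({i} ∪ {a > s})`, `i ≤ s`, in `g_i, …, g_s`; the
coefficient of `g_s` is `1` and that of `g_i` is `∏_{i < u ≤ s} (z_u - z_i)`.

* Taking `s` maximal, `q = g N` with `N` lower triangular and
  `det N = ∏_{i < u} (z_u - z_i)`, the Vandermonde product up to sign.
* The inner sum defining `p_{τ_k + j}` runs over `j` indices `i ≤ s`, where `s` is the position of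
  `p_{τ_k + j}`, so it has leading coefficient `j` at `g_s`; the terms `t < j` only involve earlier
  `g_m` (`symP_hasLead`). Hence `p = g M` with `M` upper triangular with positive integers on the
  diagonal, and in characteristic zero `det M` is a nonzero scalar.

So `U = M⁻¹ N` has polynomial entries, and `p U = g N = q`.
-/

/-- A partition `λ = (n_1^{ℓ_1} ⋯ n_r^{ℓ_r})` of `n`: integers `0 < n_1 < ⋯ < n_r`
(the `parts`) with multiplicities `ℓ_i ≥ 1` (the `mult`) and `∑ n_i ℓ_i = n`. -/
structure PartitionOf (n : ℕ) where
  r : ℕ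
  parts : Fin r → ℕ
  mult : Fin r → ℕ
  parts_pos : ∀ i, 0 < parts i
  parts_strictMono : StrictMono parts
  mult_pos : ∀ i, 0 < mult i
  sum_eq : ∑ i, parts i * mult i = n

namespace PartitionOf

variable {n : ℕ}

/-- The length `ℓ = ℓ_1 + ⋯ + ℓ_r` of the partition. -/
def length (lam : PartitionOf n) : ℕ := ∑ i, lam.mult i

/-- `τ_k = ℓ_1 + ⋯ + ℓ_k` (so `τ_0 = 0` and `τ_r = ℓ`). -/
def tau (lam : PartitionOf n) (k : ℕ) : ℕ :=
  ∑ i ∈ Finset.univ.filter (fun j : Fin lam.r => (j : ℕ) < k), lam.mult i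

/-- `σ ∈ S_λ`: the permutation `σ` of `{0,…,ℓ−1}` preserves each block
`{τ_k,…,τ_{k+1}−1}` (0-based indexing of the blocks `{τ_{k-1}+1,…,τ_k}`). -/
def InSlambda (lam : PartitionOf n) (σ : Equiv.Perm (Fin lam.length)) : Prop :=
  ∀ k : ℕ, k < lam.r → ∀ i : Fin lam.length,
    lam.tau k ≤ (i : ℕ) → (i : ℕ) < lam.tau (k + 1) →
      lam.tau k ≤ ((σ i : Fin lam.length) : ℕ) ∧
        ((σ i : Fin lam.length) : ℕ) < lam.tau (k + 1)

end PartitionOf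

open MvPolynomial in
/-- The elementary symmetric polynomial of degree `m` in the variables `z_a`, `a ∈ S`. -/
noncomputable def esymmOn {K : Type*} [CommSemiring K] {ℓ : ℕ}
    (S : Finset (Fin ℓ)) (m : ℕ) : MvPolynomial (Fin ℓ) K :=
  ∑ A ∈ S.powersetCard m, ∏ a ∈ A, MvPolynomial.X a

/-- The symmetrized polynomial `p_{τ_k+j}` (for `1 ≤ j ≤ ℓ_{k+1}`, `0 ≤ k ≤ r−1`, 1-based
position `τ_k + j`) built from the divided differences `Q` of a sequence `q`:
`p_{τ_{k+1}} = ∑_{i=τ_k+1}^{τ_{k+1}} q_{{i} ∪ {τ_{k+1}+1,…,ℓ}}` and, for `j < ℓ_{k+1}`,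
`p_{τ_k+j} = ∑_{t=1}^{j} e_{j−t}(z_{τ_k+t+2},…,z_{τ_{k+1}}) ·
(∑_{i=τ_k+1}^{τ_k+t} q_{{i} ∪ {τ_k+t+1,…,ℓ}})`  (all written in 0-based indexing). -/
noncomputable def symP {K : Type*} [CommRing K] {n : ℕ} (lam : PartitionOf n)
    (Q : Finset (Fin lam.length) → MvPolynomial (Fin lam.length) K)
    (k : ℕ) (hk : k < lam.r) (j : ℕ) : MvPolynomial (Fin lam.length) K :=
  if j = lam.mult ⟨k, hk⟩ then
    ∑ i ∈ Finset.univ.filter (fun i : Fin lam.length =>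
        lam.tau k ≤ (i : ℕ) ∧ (i : ℕ) < lam.tau (k + 1)),
      Q (insert i (Finset.univ.filter fun a : Fin lam.length => lam.tau (k + 1) ≤ (a : ℕ)))
  else
    ∑ t ∈ Finset.Icc 1 j,
      esymmOn (Finset.univ.filter fun a : Fin lam.length =>
          lam.tau k + t + 1 ≤ (a : ℕ) ∧ (a : ℕ) < lam.tau (k + 1)) (j - t) *
        ∑ i ∈ Finset.univ.filter (fun i : Fin lam.length =>
            lam.tau k ≤ (i : ℕ) ∧ (i : ℕ) < lam.tau k + t),
          Q (insert i (Finset.univ.filter fun a : Fin lam.length => lam.tau k + t ≤ (a : ℕ)))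

open MvPolynomial

/-! ### Newton expansion of divided differences -/

section Newton

variable {R : Type*} [CommRing R] {ℓ : ℕ}

/-- `f` is a combination of `g_0, …, g_s` in which `g_s` has coefficient `d`. -/
def HasLead (g : Fin ℓ → R) (s : Fin ℓ) (d f : R) : Prop :=
  ∃ w : Fin ℓ → R, (∀ m, s < m → w m = 0) ∧ w s = d ∧ f = ∑ m, g m * w m

lemma HasLead.zero (g : Fin ℓ → R) (s : Fin ℓ) : HasLead g s 0 0 :=
  ⟨0, by simp, rfl, by simp⟩

lemma HasLead.add {g : Fin ℓ → R} {s : Fin ℓ} {d f d' f' : R} (h : HasLead g s d f)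
    (h' : HasLead g s d' f') : HasLead g s (d + d') (f + f') := by
  obtain ⟨w, h1, h2, h3⟩ := h
  obtain ⟨w', h1', h2', h3'⟩ := h'
  refine ⟨w + w', fun m hm => by simp [h1 m hm, h1' m hm], by simp [h2, h2'], ?_⟩
  simp [h3, h3', mul_add, Finset.sum_add_distrib]

lemma HasLead.mul_left {g : Fin ℓ → R} {s : Fin ℓ} {d f : R} (e : R) (h : HasLead g s d f) :
    HasLead g s (e * d) (e * f) := by
  obtain ⟨w, h1, h2, h3⟩ := h
  refine ⟨fun m => e * w m, fun m hm => by simp [h1 m hm], by simp [h2], ?_⟩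
  rw [h3, Finset.mul_sum]
  exact Finset.sum_congr rfl fun m _ => by ring

lemma HasLead.mono {g : Fin ℓ → R} {s s' : Fin ℓ} {d f : R} (h : HasLead g s d f)
    (hs : s < s') : HasLead g s' 0 f := by
  obtain ⟨w, h1, -, h3⟩ := h
  exact ⟨w, fun m hm => h1 m (hs.trans hm), h1 s' hs, h3⟩

lemma HasLead.sum {ι : Type*} {g : Fin ℓ → R} {s : Fin ℓ} (S : Finset ι) (d f : ι → R)
    (h : ∀ i ∈ S, HasLead g s (d i) (f i)) : HasLead g s (∑ i ∈ S, d i) (∑ i ∈ S, f i) := by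
  classical
  induction S using Finset.induction_on with
  | empty => simpa using HasLead.zero g s
  | insert a S ha ih =>
    rw [Finset.sum_insert ha, Finset.sum_insert ha]
    exact (h a (by simp)).add (ih fun i hi => h i (by simp [hi]))

/-- Newton expansion of `Q ({i} ∪ {a > s})` in the divided differences `Q {m, …, ℓ-1}`,
`i ≤ m ≤ s`, with its two extreme coefficients. -/
lemma newton (x : Fin ℓ → R) (Q : Finset (Fin ℓ) → R)
    (hQ : ∀ I : Finset (Fin ℓ), 2 ≤ I.card → ∀ a ∈ I, ∀ b ∈ I, a ≠ b →
      (x a - x b) * Q I = Q (I.erase a) - Q (I.erase b))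
    (i : Fin ℓ) (s : ℕ) (his : (i : ℕ) ≤ s) : ∀ hs : s < ℓ,
    ∃ w : Fin ℓ → R, (∀ m, ⟨s, hs⟩ < m → w m = 0) ∧ (∀ m, m < i → w m = 0) ∧ w ⟨s, hs⟩ = 1 ∧
      w i = ∏ u ∈ Finset.Ioc i ⟨s, hs⟩, (x u - x i) ∧
      Q (insert i (Finset.Ioi ⟨s, hs⟩)) = ∑ m, Q (Finset.Ici m) * w m := by
  induction s, his using Nat.le_induction with
  | base =>
    intro hs
    refine ⟨Pi.single i 1, fun m hm => ?_, fun m hm => ?_, by simp, by simp, ?_⟩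
    · exact Pi.single_eq_of_ne (ne_of_gt hm) _
    · exact Pi.single_eq_of_ne (ne_of_lt hm) _
    · have : insert i (Finset.Ioi i) = Finset.Ici i := by
        ext a; simp only [Finset.mem_insert, Finset.mem_Ioi, Finset.mem_Ici, Fin.lt_def, Fin.le_def, Fin.ext_iff]
        omega
      simp [this, Pi.single_apply]
  | succ s his ih =>
    intro hs
    obtain ⟨w, h1, h2, h3, h4, h5⟩ := ih (by omega)
    set t : Fin ℓ := ⟨s + 1, hs⟩ with ht
    have hit : i < t := by rw [Fin.lt_def, ht]; exact Nat.lt_succ_of_le his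
    have hIoi : Finset.Ioi (⟨s, by omega⟩ : Fin ℓ) = Finset.Ici t := by
      ext a; simp only [Finset.mem_Ioi, Finset.mem_Ici, Fin.lt_def, Fin.le_def, ht]; omega
    have hst : (⟨s, by omega⟩ : Fin ℓ) < t := by rw [Fin.lt_def, ht]; simp
    rw [hIoi] at h5
    have hrec := hQ (insert i (Finset.Ici t)) (by
      rw [Finset.card_insert_of_notMem (by simpa using hit)]
      have : 0 < (Finset.Ici t).card := Finset.card_pos.2 ⟨t, by simp⟩
      omega) i (by simp) t (by simp) hit.ne
    have e1 : (insert i (Finset.Ici t)).erase i = Finset.Ici t :=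
      Finset.erase_insert (by simpa using hit)
    have e2 : (insert i (Finset.Ici t)).erase t = insert i (Finset.Ioi t) := by
      ext a
      simp only [Finset.mem_erase, Finset.mem_insert, Finset.mem_Ici, Finset.mem_Ioi,
        lt_iff_le_and_ne]
      constructor
      · rintro ⟨h, rfl | h'⟩
        · exact Or.inl rfl
        · exact Or.inr ⟨h', h.symm⟩
      · rintro (rfl | ⟨h, h'⟩)
        · exact ⟨hit.ne, Or.inl rfl⟩
        · exact ⟨h'.symm, Or.inr h⟩
    rw [e1, e2] at hrec
    refine ⟨fun m => (x t - x i) * w m + (Pi.single t 1 : Fin ℓ → R) m, fun m hm => ?_,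
      fun m hm => ?_, ?_, ?_, ?_⟩
    · simp [h1 m (hst.trans hm), hm.ne']
    · simp [h2 m hm, (hm.trans hit).ne]
    · simp [h1 t hst]
    · have : Finset.Ioc i t = insert t (Finset.Ioc i ⟨s, by omega⟩) := by
        ext a
        simp only [Finset.mem_insert, Finset.mem_Ioc, Fin.lt_def, Fin.le_def, Fin.ext_iff, ht]
        rw [Fin.lt_def, ht] at hit
        simp only at hit
        omega
      rw [this, Finset.prod_insert (by simpa using fun _ => hst), ← h4]
      simp [hit.ne]
    · have : Q (insert i (Finset.Ioi t)) = Q (Finset.Ici t)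
          + (x t - x i) * Q (insert i (Finset.Ici t)) := by linear_combination hrec
      rw [this, h5, Finset.mul_sum]
      simp only [mul_add, Finset.sum_add_distrib]
      rw [add_comm]
      congr 1
      · exact Finset.sum_congr rfl fun m _ => by ring
      · simp [Pi.single_apply]

/-- The inner sums in the symmetrization: summing `Q ({i} ∪ {a ≥ b + t})` over the `t` indices
`b ≤ i < b + t` gives leading coefficient `t`. -/
lemma blockSum_hasLead (x : Fin ℓ → R) (Q : Finset (Fin ℓ) → R)
    (hQ : ∀ I : Finset (Fin ℓ), 2 ≤ I.card → ∀ a ∈ I, ∀ b ∈ I, a ≠ b →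
      (x a - x b) * Q I = Q (I.erase a) - Q (I.erase b))
    (b t : ℕ) (ht : 1 ≤ t) (h : b + t - 1 < ℓ) :
    HasLead (fun m => Q (Finset.Ici m)) ⟨b + t - 1, h⟩ (t : R)
      (∑ i ∈ Finset.univ.filter (fun i : Fin ℓ => b ≤ (i : ℕ) ∧ (i : ℕ) < b + t),
        Q (insert i (Finset.univ.filter fun a : Fin ℓ => b + t ≤ (a : ℕ)))) := by
  have hcard : (Finset.univ.filter
      (fun i : Fin ℓ => b ≤ (i : ℕ) ∧ (i : ℕ) < b + t)).card = t := by
    rw [← Finset.card_map Fin.valEmbedding]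
    have : (Finset.univ.filter (fun i : Fin ℓ => b ≤ (i : ℕ) ∧ (i : ℕ) < b + t)).map
        Fin.valEmbedding = Finset.Ico b (b + t) := by
      ext a
      simp only [Finset.mem_map, Finset.mem_filter, Finset.mem_univ, true_and,
        Fin.valEmbedding_apply, Finset.mem_Ico]
      constructor
      · rintro ⟨y, hy, rfl⟩; exact hy
      · intro ha; exact ⟨⟨a, by omega⟩, ha, rfl⟩
    rw [this]; simp
  have hset : (Finset.univ.filter fun a : Fin ℓ => b + t ≤ (a : ℕ)) =
      Finset.Ioi ⟨b + t - 1, h⟩ := by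
    ext a; simp [Fin.lt_def]; omega
  rw [hset]
  have := HasLead.sum (g := fun m => Q (Finset.Ici m)) (s := ⟨b + t - 1, h⟩)
    (Finset.univ.filter (fun i : Fin ℓ => b ≤ (i : ℕ) ∧ (i : ℕ) < b + t)) (fun _ => (1 : R))
    (fun i => Q (insert i (Finset.Ioi ⟨b + t - 1, h⟩))) (by
      intro i hi
      simp only [Finset.mem_filter, Finset.mem_univ, true_and] at hi
      obtain ⟨w, h1, -, h3, -, h5⟩ := newton x Q hQ i (b + t - 1) (by omega) h
      exact ⟨w, h1, h3, h5⟩)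
  simpa [hcard] using this

end Newton

/-! ### Blocks of the partition and the symmetrized sequence -/

lemma tau_succ {n : ℕ} (lam : PartitionOf n) (k : ℕ) (hk : k < lam.r) :
    lam.tau (k + 1) = lam.tau k + lam.mult ⟨k, hk⟩ := by
  unfold PartitionOf.tau
  have : (Finset.univ.filter fun j : Fin lam.r => (j : ℕ) < k + 1) =
      insert ⟨k, hk⟩ (Finset.univ.filter fun j : Fin lam.r => (j : ℕ) < k) := by
    ext a; simp [Fin.ext_iff]; omega
  rw [this, Finset.sum_insert (by simp), add_comm]

/-- Every position below `τ_k` has the form `τ_{k'} + j - 1` with `1 ≤ j ≤ ℓ_{k'+1}`. -/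
lemma exists_block {n : ℕ} (lam : PartitionOf n) (k : ℕ) (hk : k ≤ lam.r) (s : ℕ)
    (hs : s < lam.tau k) : ∃ (k' : ℕ) (hk' : k' < lam.r) (j : ℕ),
      1 ≤ j ∧ j ≤ lam.mult ⟨k', hk'⟩ ∧ s = lam.tau k' + j - 1 := by
  induction k with
  | zero => simp [PartitionOf.tau] at hs
  | succ k ih =>
    by_cases h : s < lam.tau k
    · exact ih (by omega) h
    · rw [tau_succ lam k (by omega)] at hs
      exact ⟨k, by omega, s - lam.tau k + 1, by omega, by omega, by omega⟩

lemma tau_r {n : ℕ} (lam : PartitionOf n) : lam.tau lam.r = lam.length := by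
  simp [PartitionOf.tau, PartitionOf.length]

/-- `p_{τ_k + j}` has leading coefficient `j` in terms of the divided differences
`Q {m, …, ℓ-1}`. -/
lemma symP_hasLead {K : Type*} [CommRing K] {n : ℕ} (lam : PartitionOf n)
    (Q : Finset (Fin lam.length) → MvPolynomial (Fin lam.length) K)
    (hQ : ∀ I : Finset (Fin lam.length), 2 ≤ I.card → ∀ a ∈ I, ∀ b ∈ I, a ≠ b →
      (X a - X b) * Q I = Q (I.erase a) - Q (I.erase b))
    (k : ℕ) (hk : k < lam.r) (j : ℕ) (hj : 1 ≤ j) (h : lam.tau k + j - 1 < lam.length) :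
    HasLead (fun m => Q (Finset.Ici m)) ⟨lam.tau k + j - 1, h⟩
      (j : MvPolynomial (Fin lam.length) K) (symP lam Q k hk j) := by
  unfold symP
  split_ifs with hjm
  · rw [tau_succ lam k hk, ← hjm]
    exact blockSum_hasLead X Q hQ _ j hj h
  · rw [← Finset.Ico_insert_right hj, Finset.sum_insert (by simp)]
    rw [← add_zero (j : MvPolynomial (Fin lam.length) K)]
    refine HasLead.add ?_ ?_
    · have := blockSum_hasLead X Q hQ (lam.tau k) j hj h
      simpa [esymmOn] using this
    · rw [← Finset.sum_const_zero (s := Finset.Ico 1 j)]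
      refine HasLead.sum _ _ _ fun t ht => ?_
      rw [Finset.mem_Ico] at ht
      refine ((blockSum_hasLead X Q hQ (lam.tau k) t ht.1 (by omega)).mul_left _).mono ?_
      rw [Fin.mk_lt_mk]
      omega

/-- There is a polynomial matrix `U` with `det U = c·∏_{i<j}(z_i − z_j)` for a nonzero scalar
`c` (hence a unit in the localization at the Vandermonde determinant) such that
`∑_i p_i·U_{i,j} = q_j` for all `j`, where `p` is the symmetrized sequence built from the
divided differences `Q` of the `S_λ`-equivariant sequence `q`. -/
theorem stmt10 {K : Type*} [Field K] [CharZero K] {n : ℕ} (lam : PartitionOf n)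
    (q : Fin lam.length → MvPolynomial (Fin lam.length) K)
    (hequi : ∀ σ : Equiv.Perm (Fin lam.length), lam.InSlambda σ →
      ∀ i, MvPolynomial.rename σ (q i) = q (σ i))
    (hdvd : ∀ i j : Fin lam.length, i ≠ j →
      (MvPolynomial.X i - MvPolynomial.X j) ∣ (q i - q j))
    (Q : Finset (Fin lam.length) → MvPolynomial (Fin lam.length) K)
    (hQ1 : ∀ i : Fin lam.length, Q {i} = q i)
    (hQ2 : ∀ I : Finset (Fin lam.length), 2 ≤ I.card → ∀ a ∈ I, ∀ b ∈ I, a ≠ b →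
      (MvPolynomial.X a - MvPolynomial.X b) * Q I = Q (I.erase a) - Q (I.erase b))
    (p : Fin lam.length → MvPolynomial (Fin lam.length) K)
    (hp : ∀ (k : ℕ) (hk : k < lam.r) (j : ℕ), 1 ≤ j → j ≤ lam.mult ⟨k, hk⟩ →
      ∀ h : lam.tau k + j - 1 < lam.length,
        p ⟨lam.tau k + j - 1, h⟩ = symP lam Q k hk j) :
    ∃ (U : Matrix (Fin lam.length) (Fin lam.length) (MvPolynomial (Fin lam.length) K))
      (c : K), c ≠ 0 ∧
        U.det = MvPolynomial.C c *
          ∏ ij ∈ Finset.univ.filter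
              (fun ij : Fin lam.length × Fin lam.length => ij.1 < ij.2),
            (MvPolynomial.X ij.1 - MvPolynomial.X ij.2) ∧
        ∀ j : Fin lam.length, ∑ i, p i * U i j = q j := by
  classical
  set g : Fin lam.length → MvPolynomial (Fin lam.length) K := fun m => Q (Finset.Ici m) with hg
  have hM : ∀ s : Fin lam.length, ∃ j : ℕ, 1 ≤ j ∧
      HasLead g s (j : MvPolynomial (Fin lam.length) K) (p s) := by
    rintro ⟨s, hs⟩
    obtain ⟨k, hk, j, h1, h2, rfl⟩ :=
      exists_block lam lam.r le_rfl s (by rw [tau_r]; exact hs)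
    exact ⟨j, h1, by rw [hp k hk j h1 h2 hs]; exact symP_hasLead lam Q hQ2 k hk j h1 hs⟩
  choose d hd w hw0 hwd hw using hM
  have hN : ∀ i : Fin lam.length, ∃ v : Fin lam.length → MvPolynomial (Fin lam.length) K,
      (∀ m, m < i → v m = 0) ∧ v i = ∏ u ∈ Finset.Ioi i, (X u - X i) ∧
      q i = ∑ m, g m * v m := by
    intro i
    have hi := i.2
    obtain ⟨v, -, h2, -, h4, h5⟩ := newton X Q hQ2 i (lam.length - 1) (by omega) (by omega)
    refine ⟨v, h2, ?_, ?_⟩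
    · rw [h4]
      refine Finset.prod_congr ?_ fun _ _ => rfl
      ext a
      simp only [Finset.mem_Ioc, Finset.mem_Ioi, Fin.lt_def, Fin.le_def]
      omega
    · rw [← h5, ← hQ1]
      congr 1
      ext a; simp [Fin.lt_def]; omega
  choose v hv0 hvd hv using hN
  let M : Matrix (Fin lam.length) (Fin lam.length) (MvPolynomial (Fin lam.length) K) :=
    Matrix.of fun m s => w s m
  let N : Matrix (Fin lam.length) (Fin lam.length) (MvPolynomial (Fin lam.length) K) :=
    Matrix.of fun m s => v s m
  have hpM : p = Matrix.vecMul g M := by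
    ext1 s; rw [hw s]; rfl
  have hqN : q = Matrix.vecMul g N := by
    ext1 s; rw [hv s]; rfl
  set c : K := ∏ s, (d s : K) with hc
  have hc0 : c ≠ 0 := Finset.prod_ne_zero_iff.2 fun s _ => by
    have := hd s
    exact Nat.cast_ne_zero.2 (by omega)
  have hdetM : M.det = C c := by
    rw [Matrix.det_of_isUpperTriangular (M := M) (fun m s hms => hw0 s m hms)]
    simp [M, hwd, hc]
  have hdetN : N.det = ∏ i, ∏ u ∈ Finset.Ioi i, (X u - X i) := by
    rw [Matrix.det_of_isLowerTriangular N (fun m s hms => hv0 s m hms)]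
    simp [N, hvd]
  have hunit : IsUnit M.det := by
    rw [hdetM]; exact (IsUnit.mk0 c hc0).map C
  have hdetInv : M⁻¹.det = C c⁻¹ := by
    have h1 : M⁻¹.det * M.det = 1 := Matrix.det_nonsing_inv_mul_det M hunit
    have h2 : M.det * C c⁻¹ = 1 := by rw [hdetM, ← C_mul, mul_inv_cancel₀ hc0, C_1]
    exact left_inv_eq_right_inv h1 h2
  -- The sign turning `∏ (z_u - z_i)` into `∏ (z_i - z_u)` is absorbed into the scalar.
  set T := Finset.univ.filter
    (fun ij : Fin lam.length × Fin lam.length => ij.1 < ij.2) with hT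
  have hprod : (∏ i : Fin lam.length, ∏ u ∈ Finset.Ioi i, (X u - X i) :
      MvPolynomial (Fin lam.length) K) = C ((-1) ^ T.card) * ∏ ij ∈ T, (X ij.1 - X ij.2) := by
    have : ∀ ij ∈ T, (X ij.2 - X ij.1 : MvPolynomial (Fin lam.length) K) =
      -1 * (X ij.1 - X ij.2) := fun _ _ => by ring
    rw [C_pow, C_neg, C_1, ← Finset.prod_const, ← Finset.prod_mul_distrib,
      ← Finset.prod_congr rfl this, Finset.prod_sigma']
    refine Finset.prod_bij' (fun x _ => (x.1, x.2)) (fun x _ => ⟨x.1, x.2⟩) ?_ ?_ ?_ ?_ ?_ <;>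
      simp [hT]
  refine ⟨M⁻¹ * N, c⁻¹ * (-1) ^ T.card, mul_ne_zero (inv_ne_zero hc0) (by simp), ?_, ?_⟩
  · rw [Matrix.det_mul, hdetInv, hdetN, hprod, C_mul, mul_assoc]
  · intro j
    have : Matrix.vecMul p (M⁻¹ * N) = q := by
      rw [hpM, hqN, Matrix.vecMul_vecMul, ← mul_assoc, Matrix.mul_nonsing_inv M hunit, one_mul]
    exact congrFun this j
end

section
/- Let K be a field, f_1,…,f_s and φ symmetric polynomials in K[x_1,…,x_n] with s < n, and λ a partition of n of length ℓ with ℓ > s. Let H be an (s+1)×ℓ matrix over K[z_1,…,z_ℓ] whose entries are all S_λ-invariant and such that H = G^{[λ]}·U for some matrix U ∈ K[z_1,…,z_ℓ]^{ℓ×ℓ} whose determinant is nonzero at every point of K^ℓ with pairwise distinct coordinates; let H̄ be the matrix obtained from H by expressing each entry in the block elementary symmetric polynomials. Then for every ε ∈ K^ℓ of the form ε = E_λ(ζ₀) for some ζ₀ ∈ K^ℓ with pairwise distinct coordinates, the following are equivalent: (1) f̄_i^{[λ]}(ε) = 0 for i = 1,…,s and every (s+1)×(s+1) minor of H̄ vanishes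 at ε; (2) there exists ζ ∈ K^ℓ with pairwise distinct coordinates such that ι_λ(ζ) ∈ W(φ,f) and E_λ(ζ) = ε. -/
/-- The index (0-based) of the block of the partition containing position `c`. -/
def blockIdx {n : ℕ} (lam : PartitionOf n) (c : Fin lam.length) : ℕ :=
  Nat.findGreatest (fun k => lam.tau k ≤ (c : ℕ)) lam.r

/-- The (0-based) block `{τ_k,…,τ_{k+1}−1}` of positions, as a finset of `Fin ℓ`. -/
def blockFinset {n : ℕ} (lam : PartitionOf n) (k : ℕ) : Finset (Fin lam.length) :=
  Finset.univ.filter fun a : Fin lam.length =>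
    lam.tau k ≤ (a : ℕ) ∧ (a : ℕ) < lam.tau (k + 1)

/-- `η` at position `c`: the elementary symmetric polynomial of degree `j` (the 1-based offset
of `c` in its block) in the variables of the block of `c`. -/
noncomputable def etaPoly {K : Type*} [CommSemiring K] {n : ℕ} (lam : PartitionOf n)
    (c : Fin lam.length) : MvPolynomial (Fin lam.length) K :=
  ∑ A ∈ (blockFinset lam (blockIdx lam c)).powersetCard
      ((c : ℕ) - lam.tau (blockIdx lam c) + 1),
    ∏ a ∈ A, MvPolynomial.X a

/-- The compression map `E_λ : K^ℓ → K^ℓ`, sending `ζ` to the values of the blockwise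
elementary symmetric polynomials at `ζ`. -/
noncomputable def Emap {K : Type*} [CommSemiring K] {n : ℕ} (lam : PartitionOf n)
    (ζ : Fin lam.length → K) : Fin lam.length → K :=
  fun c => MvPolynomial.eval ζ (etaPoly lam c)

open MvPolynomial

/-- A matrix with `s + 1` rows over a field has rank at most `s` iff all its maximal minors
vanish. -/
theorem rank_le_iff_minors_eq_zero {K : Type*} [Field K] {s l : ℕ}
    (A : Matrix (Fin (s + 1)) (Fin l) K) :
    A.rank ≤ s ↔ ∀ cols : Fin (s + 1) → Fin l, Function.Injective cols →
      (A.submatrix id cols).det = 0 := by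
  constructor
  · intro h cols _
    by_contra hdet
    have h1 := Matrix.rank_of_det_ne_zero hdet
    have h2 := A.rank_submatrix_le id cols
    rw [h1, Fintype.card_fin] at h2
    omega
  · intro h
    by_contra! hlt
    have hrank : A.rank = s + 1 := le_antisymm A.rank_le_height hlt
    rw [Matrix.rank_eq_finrank_span_cols] at hrank
    -- a basis of the column space chosen among the columns gives a nonzero maximal minor
    obtain ⟨g, hg, -, hli⟩ := Submodule.exists_fun_fin_finrank_span_eq K (Set.range A.col)
    choose cols hcols using hg
    let cols' : Fin (s + 1) → Fin l := cols ∘ finCongr hrank.symm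
    have hli' : LinearIndependent K (A.submatrix id cols').col := by
      have : (A.submatrix id cols').col = g ∘ finCongr hrank.symm := by
        funext j
        exact hcols _
      rw [this]
      exact hli.comp _ (finCongr hrank.symm).injective
    have hinj : Function.Injective cols' := fun a b hab =>
      hli'.injective (by ext i; simp [Matrix.col, hab])
    have hunit := Matrix.linearIndependent_cols_iff_isUnit.1 hli'
    exact ((Matrix.isUnit_iff_isUnit_det _).1 hunit).ne_zero (h cols' hinj)

/-- At a point whose `j`-th and `k`-th coordinates coincide, the `j`-th and `k`-th partial
derivatives of a symmetric polynomial agree: the transposition of `j` and `k` fixes both the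
polynomial and the point. -/
theorem eval_pderiv_eq_of_isSymmetric {K : Type*} [CommRing K] {n : ℕ}
    {p : MvPolynomial (Fin n) K} (hp : p.IsSymmetric) (ξ : Fin n → K) {j k : Fin n}
    (hξ : ξ j = ξ k) : eval ξ (pderiv j p) = eval ξ (pderiv k p) := by
  have h := pderiv_rename (Equiv.swap j k).injective j p
  rw [hp, Equiv.swap_apply_left] at h
  rw [h, eval_rename]
  congr 2
  funext x
  simp only [Function.comp_apply, Equiv.swap_apply_def]
  split_ifs <;> simp_all

/-- Evaluating `h̄` at `E_λ(ζ)` gives the value at `ζ` of the polynomial that `h̄` expresses. -/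
theorem eval_Emap {K : Type*} [CommRing K] {n : ℕ} (lam : PartitionOf n)
    (ζ : Fin lam.length → K) (p : MvPolynomial (Fin lam.length) K) :
    eval (Emap lam ζ) p = eval ζ (aeval (etaPoly (K := K) lam) p) := by
  rw [aeval_def, algebraMap_eq, ← eval₂_id, eval₂_comp_left (eval ζ)]
  have : (eval ζ).comp C = RingHom.id K := by ext; simp
  rw [this]
  rfl

/-- For symmetric `f_1,…,f_s, φ`, a partition `λ` of length `ℓ > s`, an `S_λ`-invariant matrix
`H = G^{[λ]}·U` with `det U` nonvanishing at points with pairwise distinct coordinates, and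
`H̄, f̄_i^{[λ]}` the expressions in the blockwise elementary symmetric polynomials: for every
`ε = E_λ(ζ₀)` with `ζ₀` having pairwise distinct coordinates, all `f̄_i^{[λ]}` and all
`(s+1)`-minors of `H̄` vanish at `ε` iff `ε = E_λ(ζ)` for some `ζ` with pairwise distinct
coordinates and `ι_λ(ζ) ∈ W(φ,f)`. -/
theorem stmt13 {K : Type*} [Field K] {n s : ℕ} (hs : s < n)
    (f : Fin s → MvPolynomial (Fin n) K) (φ : MvPolynomial (Fin n) K)
    (hf : ∀ i, (f i).IsSymmetric) (hφ : φ.IsSymmetric)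
    (lam : PartitionOf n) (hls : s < lam.length)
    (ψ : Fin n → Fin lam.length) (hmono : Monotone ψ)
    (hfib : ∀ (k : ℕ) (hk : k < lam.r), ∀ c : Fin lam.length,
      lam.tau k ≤ (c : ℕ) → (c : ℕ) < lam.tau (k + 1) →
        (Finset.univ.filter fun x : Fin n => ψ x = c).card = lam.parts ⟨k, hk⟩)
    (u : Fin lam.length → Fin n) (hu : ∀ c, ψ (u c) = c)
    (H : Matrix (Fin (s + 1)) (Fin lam.length) (MvPolynomial (Fin lam.length) K))
    (hHinv : ∀ σ : Equiv.Perm (Fin lam.length), lam.InSlambda σ →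
      ∀ i c, rename σ (H i c) = H i c)
    (hHU : ∃ U : Matrix (Fin lam.length) (Fin lam.length) (MvPolynomial (Fin lam.length) K),
      (∀ ζ : Fin lam.length → K, Function.Injective ζ → eval ζ U.det ≠ 0) ∧
      ∀ i c, H i c =
        ∑ c', rename ψ
            (pderiv (u c') ((Fin.snoc f φ : Fin (s + 1) → MvPolynomial (Fin n) K) i)) *
          U c' c)
    (fbar : Fin s → MvPolynomial (Fin lam.length) K)
    (hfbar : ∀ i, aeval (etaPoly (K := K) lam) (fbar i) = rename ψ (f i))
    (Hbar : Matrix (Fin (s + 1)) (Fin lam.length) (MvPolynomial (Fin lam.length) K))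
    (hHbar : ∀ i c, aeval (etaPoly (K := K) lam) (Hbar i c) = H i c)
    (ε : Fin lam.length → K) (ζ₀ : Fin lam.length → K)
    (hζ₀ : Function.Injective ζ₀) (hEζ₀ : Emap lam ζ₀ = ε) :
    ((∀ i, eval ε (fbar i) = 0) ∧
        ∀ cols : Fin (s + 1) → Fin lam.length, Function.Injective cols →
          eval ε (Matrix.det fun i j => Hbar i (cols j)) = 0) ↔
      ∃ ζ : Fin lam.length → K, Function.Injective ζ ∧
        ((∀ i, eval (ζ ∘ ψ) (f i) = 0) ∧
          (Matrix.of fun (i : Fin (s + 1)) (j : Fin n) =>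
            eval (ζ ∘ ψ)
              (pderiv j ((Fin.snoc f φ : Fin (s + 1) → MvPolynomial (Fin n) K) i))).rank ≤ s) ∧
        Emap lam ζ = ε := by
  obtain ⟨U, hUdet, hHU⟩ := hHU
  have hsym : ∀ i, ((Fin.snoc f φ : Fin (s + 1) → MvPolynomial (Fin n) K) i).IsSymmetric := by
    intro i
    refine Fin.lastCases ?_ (fun i => ?_) i
    · simpa using hφ
    · simpa using hf i
  -- the equivalence holds at each single point `ζ` over `ε` with distinct coordinates
  have key : ∀ ζ : Fin lam.length → K, Function.Injective ζ → Emap lam ζ = ε →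
      (((∀ i, eval ε (fbar i) = 0) ∧
        ∀ cols : Fin (s + 1) → Fin lam.length, Function.Injective cols →
          eval ε (Matrix.det fun i j => Hbar i (cols j)) = 0) ↔
      ((∀ i, eval (ζ ∘ ψ) (f i) = 0) ∧
          (Matrix.of fun (i : Fin (s + 1)) (j : Fin n) =>
            eval (ζ ∘ ψ)
              (pderiv j ((Fin.snoc f φ : Fin (s + 1) → MvPolynomial (Fin n) K) i))).rank ≤ s)) := by
    rintro ζ hζ rfl
    set J : Matrix (Fin (s + 1)) (Fin n) K := Matrix.of fun i j =>
      eval (ζ ∘ ψ) (pderiv j ((Fin.snoc f φ : Fin (s + 1) → MvPolynomial (Fin n) K) i)) with hJ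
    have hGJ : (J.submatrix id u).submatrix id ψ = J := by
      ext i j
      exact eval_pderiv_eq_of_isSymmetric (hsym i) _ (by simp [hu])
    have hrankJ : (J.submatrix id u).rank = J.rank := by
      refine le_antisymm (J.rank_submatrix_le id u) ?_
      conv_lhs => rw [← hGJ]
      exact (J.submatrix id u).rank_submatrix_le id ψ
    have hH : (H.map (eval ζ)) = J.submatrix id u * U.map (eval ζ) := by
      ext i c
      simp [hHU, Matrix.mul_apply, hJ, eval_rename]
    have hU : (U.map (eval ζ)).det ≠ 0 := by
      have h := hUdet ζ hζ
      rwa [RingHom.map_det] at h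
    have hrankH : (H.map (eval ζ)).rank = J.rank := by
      rw [hH, ← hrankJ]
      exact Matrix.rank_mul_eq_left_of_det_ne_zero _ _ hU
    rw [← hrankH, rank_le_iff_minors_eq_zero]
    refine and_congr (forall_congr' fun i => ?_)
      (forall_congr' fun cols => forall_congr' fun _ => ?_)
    · rw [eval_Emap, hfbar, eval_rename]
    · have hmap : (eval (Emap lam ζ)).mapMatrix (Hbar.submatrix id cols) =
          (H.map (eval ζ)).submatrix id cols := by
        ext i j
        have h := eval_Emap lam ζ (Hbar i (cols j))
        rw [hHbar] at h
        simpa using h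
      change eval (Emap lam ζ) (Hbar.submatrix id cols).det = 0 ↔ _
      rw [RingHom.map_det, hmap]
  constructor
  · intro h
    exact ⟨ζ₀, hζ₀, (key ζ₀ hζ₀ hEζ₀).1 h, hEζ₀⟩
  · rintro ⟨ζ, hζ, h, hE⟩
    exact (key ζ hζ hE).2 h
end
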